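/- arXiv:2604.25461 — 3 statements merged into one kernel-verified Lean document; each statement's English description precedes it below -/
import Mathlib

section
/- Let q = p^n be a prime power, take r = 3, k = (q^3 − 1)/(q − 1) = q^2 + q + 1, and 0 ≤ a,b ≤ q−2. Put A(X) = X^3 − ω^{ak}, B(X) = (X+1)^3 − ω^{bk} ∈ 𝔽_q[X], T_3(a,b) = {x ∈ 𝔽_q : x^3 = ω^{ak} and (x+1)^3 = ω^{bk}}, and λ = 0 if p = 2 and λ = (q−1)/2 if p is odd. Then: #T_3(a,b) = 1 if p = 3 and 1 + ω^{ak} − ω^{bk} = 0; #T_3(a,b) = 0 if p = 3 and 1 + ω^{ak} − ω^{bk} ≠ 0; #T_3(a,b) = 2 if p ≠ 3, (a,b) = (0,λ), and 3 ∣ (q−1); #T_3(a,b) = 0 if p ≠ 3, (a,b) = (0,λ), and 3 ∤ (q−1); #T_3(a,b) = 1 if p ≠ 3, (a,b) ≠ (0,λ), and Res(A,B) = 0; and #T_3(a,b) = 0 if p ≠ 3, (a,b) ≠ (0,λ), and Res(A,B) ≠ 0. -/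
/-- The resultant `Res(A, B)` of `A(X) = X^3 - u` and `B(X) = (X+1)^3 - v`, i.e. the
determinant of their `6 × 6` Sylvester matrix. The coefficient lists are
`A : 1, 0, 0, -u` and `B : 1, 3, 3, 1 - v` (from `X^3` down to the constant term). -/
def res3 {K : Type*} [CommRing K] (u v : K) : K :=
  Matrix.det !![(1 : K), 0, 0, -u, 0, 0;
                0, 1, 0, 0, -u, 0;
                0, 0, 1, 0, 0, -u;
                1, 3, 3, 1 - v, 0, 0;
                0, 1, 3, 3, 1 - v, 0;
                0, 0, 1, 3, 3, 1 - v]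

theorem res3_eq {K : Type*} [CommRing K] (u v : K) :
    res3 u v = (1 + u - v) ^ 3 + 27 * u + 27 * u ^ 2 - 27 * (1 + u - v) * u := by
  unfold res3
  simp [Matrix.det_succ_row_zero, Fin.sum_univ_succ, Fin.succAbove]
  ring

theorem aux_res_zero {K : Type*} [Field K] {u v x : K} (h1 : x ^ 3 = u) (h2 : (x + 1) ^ 3 = v) :
    res3 u v = 0 := by
  rw [res3_eq, ← h1, ← h2]; ring

theorem aux_quad {K : Type*} [Field K] (h3 : (3 : K) ≠ 0) (x : K) :
    (x ^ 3 = 1 ∧ (x + 1) ^ 3 = -1) ↔ x ^ 2 + x + 1 = 0 := by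
  constructor
  · rintro ⟨h1, h2⟩
    apply mul_left_cancel₀ h3
    linear_combination h2 - h1
  · intro h
    constructor
    · linear_combination (x - 1) * h
    · linear_combination (x + 2) * h

theorem aux_unique {K : Type*} [Field K] (h3 : (3 : K) ≠ 0) {u v : K} (huv : ¬ (u = 1 ∧ v = -1))
    {x y : K} (h1 : x ^ 3 = u) (h2 : (x + 1) ^ 3 = v) (h3' : y ^ 3 = u) (h4 : (y + 1) ^ 3 = v) :
    x = y := by
  by_contra hne
  have hd : x - y ≠ 0 := sub_ne_zero.mpr hne
  have hA : x ^ 2 + x * y + y ^ 2 = 0 := by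
    apply mul_left_cancel₀ hd
    linear_combination h1 - h3'
  have hB : x + y + 1 = 0 := by
    apply mul_left_cancel₀ hd
    apply mul_left_cancel₀ h3
    linear_combination h2 - h1 - h4 + h3'
  have hy : y = -1 - x := by linear_combination hB
  have hq : x ^ 2 + x + 1 = 0 := by rw [hy] at hA; linear_combination hA
  have := (aux_quad h3 x).2 hq
  exact huv ⟨h1 ▸ this.1, h2 ▸ this.2⟩

theorem aux_exists {K : Type*} [Field K] (h3 : (3 : K) ≠ 0) {u v : K} (huv : ¬ (u = 1 ∧ v = -1))
    (h : res3 u v = 0) : ∃ x : K, x ^ 3 = u ∧ (x + 1) ^ 3 = v := by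
  rw [res3_eq] at h
  obtain ⟨d, hd⟩ : ∃ d : K, 1 + u - v = 3 * d := ⟨(1 + u - v) / 3, by field_simp⟩
  rw [hd] at h
  have h27 : (27 : K) ≠ 0 := by
    have : (27 : K) = 3 ^ 3 := by norm_num
    rw [this]; exact pow_ne_zero _ h3
  have hr : d ^ 3 + u + u ^ 2 - 3 * d * u = 0 := by
    apply mul_left_cancel₀ h27
    linear_combination h
  have hd1 : 1 - d ≠ 0 := by
    intro h0
    have hd1 : d = 1 := by linear_combination -h0
    subst hd1
    have hu : u = 1 := by
      have : (u - 1) ^ 2 = 0 := by linear_combination hr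
      exact sub_eq_zero.mp (pow_eq_zero_iff (two_ne_zero)|>.1 this)
    subst hu
    exact huv ⟨rfl, by linear_combination -hd⟩
  obtain ⟨x, hx⟩ : ∃ x : K, (1 - d) * x = u - d := ⟨(u - d) / (1 - d), by field_simp⟩
  have hq : x ^ 2 + x + d = 0 := by
    apply mul_left_cancel₀ (pow_ne_zero 2 hd1)
    linear_combination hr + ((1 - d) * x + (u - d) + (1 - d)) * hx
  have hx3 : x ^ 3 = u := by linear_combination (x - 1) * hq + hx
  exact ⟨x, hx3, by linear_combination hx3 + 3 * hq + hd⟩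

/-- Case analysis for `#T_3(a,b)` where `T_3(a,b) = {x ∈ 𝔽_q : x^3 = ζ^a, (x+1)^3 = ζ^b}`,
`ζ = ω^k` is a generator of `𝔽_q^×`, `λ = 0` if `p = 2` and `λ = (q-1)/2` if `p` is odd,
and `Res` is the resultant of `X^3 - ζ^a` and `(X+1)^3 - ζ^b`. -/
theorem card_T_three_cases {p n q lam : ℕ} (hp : p.Prime) (hn : 1 ≤ n) (hq : q = p ^ n)
    (hlam : lam = if p = 2 then 0 else (q - 1) / 2)
    {K : Type*} [Field K] [Fintype K] (hK : Fintype.card K = q)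
    (ζ : Kˣ) (hζ : ∀ x : Kˣ, x ∈ Subgroup.zpowers ζ)
    (a b : ℕ) (ha : a ≤ q - 2) (hb : b ≤ q - 2) :
    (p = 3 → 1 + (ζ : K) ^ a - (ζ : K) ^ b = 0 →
      Nat.card {x : K | x ^ 3 = (ζ : K) ^ a ∧ (x + 1) ^ 3 = (ζ : K) ^ b} = 1) ∧
    (p = 3 → 1 + (ζ : K) ^ a - (ζ : K) ^ b ≠ 0 →
      Nat.card {x : K | x ^ 3 = (ζ : K) ^ a ∧ (x + 1) ^ 3 = (ζ : K) ^ b} = 0) ∧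
    (p ≠ 3 → (a, b) = (0, lam) → 3 ∣ (q - 1) →
      Nat.card {x : K | x ^ 3 = (ζ : K) ^ a ∧ (x + 1) ^ 3 = (ζ : K) ^ b} = 2) ∧
    (p ≠ 3 → (a, b) = (0, lam) → ¬ (3 ∣ (q - 1)) →
      Nat.card {x : K | x ^ 3 = (ζ : K) ^ a ∧ (x + 1) ^ 3 = (ζ : K) ^ b} = 0) ∧
    (p ≠ 3 → (a, b) ≠ (0, lam) → res3 ((ζ : K) ^ a) ((ζ : K) ^ b) = 0 →
      Nat.card {x : K | x ^ 3 = (ζ : K) ^ a ∧ (x + 1) ^ 3 = (ζ : K) ^ b} = 1) ∧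
    (p ≠ 3 → (a, b) ≠ (0, lam) → res3 ((ζ : K) ^ a) ((ζ : K) ^ b) ≠ 0 →
      Nat.card {x : K | x ^ 3 = (ζ : K) ^ a ∧ (x + 1) ^ 3 = (ζ : K) ^ b} = 0) := by
  have hq2 : 2 ≤ q := by rw [← hK]; exact Fintype.one_lt_card
  haveI : Fact p.Prime := ⟨hp⟩
  haveI : CharP K p := by
    obtain ⟨p', hc⟩ := CharP.exists K
    obtain ⟨m, hp', hm⟩ := FiniteField.card K p'
    have : p' = p := by
      have h1 : p' ∣ p ^ n := by
        rw [← hq, ← hK, hm]; exact dvd_pow_self _ m.ne_zero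
      exact (Nat.prime_dvd_prime_iff_eq hp' hp).1 (hp'.dvd_of_dvd_pow h1)
    exact this ▸ hc
  have hord : orderOf ζ = q - 1 := by
    classical
    rw [orderOf_eq_card_of_forall_mem_zpowers hζ, Nat.card_eq_fintype_card, Fintype.card_units, hK]
  have hinj : ∀ i j : ℕ, i ≤ q - 2 → j ≤ q - 2 → (ζ : K) ^ i = (ζ : K) ^ j → i = j := by
    intro i j hi hj h
    have h' : ζ ^ i = ζ ^ j := by ext; simpa using h
    exact pow_injOn_Iio_orderOf (by simp [hord]; omega) (by simp [hord]; omega) h'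
  have hlam2 : lam ≤ q - 2 := by rw [hlam]; split_ifs <;> omega
  have hfer : (ζ : K) ^ (q - 1) = 1 := by
    rw [← hord, ← Units.val_pow_eq_pow_val, pow_orderOf_eq_one]; rfl
  have hzl : (ζ : K) ^ lam = -1 := by
    by_cases h2 : p = 2
    · subst h2
      rw [hlam, if_pos rfl, pow_zero, CharTwo.neg_eq]
    · have hodd : Odd q := by rw [hq]; exact (hp.odd_of_ne_two h2).pow
      obtain ⟨m, hm⟩ := hodd
      have hl : lam = m := by rw [hlam, if_neg h2]; omega
      have hsq : (ζ : K) ^ lam * (ζ : K) ^ lam = 1 := by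
        rw [← pow_add, ← hfer]; congr 1; omega
      rcases mul_self_eq_one_iff.1 hsq with h | h
      · have := hinj lam 0 hlam2 (by omega) (by simpa using h)
        omega
      · exact h
  have h3 : p ≠ 3 → (3 : K) ≠ 0 := by
    intro h h0
    have : p ∣ 3 := (CharP.cast_eq_zero_iff K p 3).1 (by exact_mod_cast h0)
    exact h ((Nat.prime_dvd_prime_iff_eq hp Nat.prime_three).1 this)
  have huv : (a, b) ≠ (0, lam) → ¬ ((ζ : K) ^ a = 1 ∧ (ζ : K) ^ b = -1) := by
    rintro h ⟨h1, h2⟩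
    apply h
    rw [hinj a 0 ha (by omega) (by simpa using h1), hinj b lam hb hlam2 (by rw [h2, hzl])]
  refine ⟨?_, ?_, ?_, ?_, ?_, ?_⟩
  · intro hp3 h
    subst hp3
    obtain ⟨x, hx⟩ := (Finite.injective_iff_surjective.1 (frobenius_inj K 3)) ((ζ : K) ^ a)
    rw [frobenius_def] at hx
    rw [Nat.card_coe_set_eq, Set.ncard_eq_one]
    refine ⟨x, ?_⟩
    ext y
    simp only [Set.mem_setOf_eq, Set.mem_singleton_iff]
    constructor
    · rintro ⟨h1, -⟩
      apply frobenius_inj K 3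
      rw [frobenius_def, frobenius_def, hx, h1]
    · rintro rfl
      refine ⟨hx, ?_⟩
      rw [add_pow_char, hx]; linear_combination h
  · intro hp3 h
    subst hp3
    rw [Nat.card_coe_set_eq, Set.ncard_eq_zero, Set.eq_empty_iff_forall_notMem]
    rintro x ⟨h1, h2⟩
    rw [add_pow_char] at h2
    apply h
    linear_combination h2 - h1
  · intro hp3 hab hd
    obtain ⟨rfl, rfl⟩ := Prod.mk.inj hab
    rw [hzl, pow_zero]
    simp only [aux_quad (h3 hp3)]
    obtain ⟨m, hm⟩ := hd
    have hy3 : ((ζ : K) ^ m) ^ 3 = 1 := by rw [← pow_mul, mul_comm, ← hm, hfer]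
    have hy1 : (ζ : K) ^ m ≠ 1 := by
      intro h
      have := hinj m 0 (by omega) (by omega) (by simpa using h)
      omega
    generalize (ζ : K) ^ m = y at hy3 hy1
    have hy : y ^ 2 + y + 1 = 0 := by
      apply mul_left_cancel₀ (sub_ne_zero.mpr hy1)
      linear_combination hy3
    rw [Nat.card_coe_set_eq, Set.ncard_eq_two]
    refine ⟨y, -1 - y, ?_, ?_⟩
    · intro h
      apply h3 hp3
      linear_combination 4 * hy - (2 * y + 1) * h
    · ext x
      simp only [Set.mem_setOf_eq, Set.mem_insert_iff, Set.mem_singleton_iff]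
      constructor
      · intro hx
        have : (x - y) * (x - (-1 - y)) = 0 := by linear_combination hx - hy
        rcases mul_eq_zero.1 this with h | h
        · exact Or.inl (sub_eq_zero.1 h)
        · exact Or.inr (sub_eq_zero.1 h)
      · rintro (rfl | rfl)
        · exact hy
        · linear_combination hy
  · intro hp3 hab hd
    obtain ⟨rfl, rfl⟩ := Prod.mk.inj hab
    rw [hzl, pow_zero]
    simp only [aux_quad (h3 hp3)]
    rw [Nat.card_coe_set_eq, Set.ncard_eq_zero, Set.eq_empty_iff_forall_notMem]
    intro x hx
    simp only [Set.mem_setOf_eq] at hx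
    have hx3 : x ^ 3 = 1 := by linear_combination (x - 1) * hx
    have hx0 : x ≠ 0 := by rintro rfl; simp at hx
    have hxq : x ^ (q - 1) = 1 := by rw [← hK]; exact FiniteField.pow_card_sub_one_eq_one x hx0
    have hcop : Nat.Coprime 3 (q - 1) := (Nat.Prime.coprime_iff_not_dvd Nat.prime_three).2 hd
    have hx1 : x = 1 := by
      have hg : orderOf x ∣ Nat.gcd 3 (q - 1) :=
        Nat.dvd_gcd (orderOf_dvd_of_pow_eq_one hx3) (orderOf_dvd_of_pow_eq_one hxq)
      rw [hcop] at hg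
      exact orderOf_eq_one_iff.1 (Nat.dvd_one.1 hg)
    subst hx1
    apply h3 hp3
    linear_combination hx
  · intro hp3 hab hr
    obtain ⟨x, hx1, hx2⟩ := aux_exists (h3 hp3) (huv hab) hr
    rw [Nat.card_coe_set_eq, Set.ncard_eq_one]
    refine ⟨x, ?_⟩
    ext y
    simp only [Set.mem_setOf_eq, Set.mem_singleton_iff]
    constructor
    · rintro ⟨h1, h2⟩
      exact aux_unique (h3 hp3) (huv hab) h1 h2 hx1 hx2
    · rintro rfl
      exact ⟨hx1, hx2⟩
  · intro hp3 hab hr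
    rw [Nat.card_coe_set_eq, Set.ncard_eq_zero, Set.eq_empty_iff_forall_notMem]
    rintro x ⟨h1, h2⟩
    exact hr (aux_res_zero h1 h2)
end

section
/- Let q = p^n be a prime power, take r = 3, k = q^2 + q + 1, and 0 ≤ a,b ≤ q−2. Let I_3(a,b) be the set of monic irreducible cubic polynomials f ∈ 𝔽_q[X] with f(0) = −ω^{ak} and f(−1) = −ω^{bk}, and define φ_{a,b} : 𝔽_q∖{0,−1} → 𝔽_q by φ_{a,b}(x) = x − 1 − ω^{ak}/x + ω^{bk}/(x+1). Then #I_3(a,b) = q − #Im(φ_{a,b}). In particular, 2 ≤ #I_3(a,b) ≤ ⌊(2q+2)/3⌋. -/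
open Polynomial in
/-- the cubic with parameter `s` -/
noncomputable def cubicG {K : Type*} [Field K] (A B s : K) : K[X] :=
  Cubic.toPoly ⟨1, -s, -s - 1 - A + B, -A⟩

lemma cubicG_monic {K : Type*} [Field K] (A B s : K) : (cubicG A B s).Monic :=
  Cubic.monic_of_a_eq_one rfl

lemma cubicG_natDegree {K : Type*} [Field K] (A B s : K) : (cubicG A B s).natDegree = 3 :=
  Cubic.natDegree_of_a_ne_zero (one_ne_zero)

lemma cubicG_eval {K : Type*} [Field K] (A B s x : K) :
    (cubicG A B s).eval x = x ^ 3 - s * x ^ 2 + (-s - 1 - A + B) * x - A := by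
  simp [cubicG, Cubic.toPoly]; ring

lemma cubicG_root {K : Type*} [Field K] (A B s x : K) (hA : A ≠ 0) (hB : B ≠ 0) :
    (cubicG A B s).eval x = 0 ↔ x ≠ 0 ∧ x ≠ -1 ∧ s = x - 1 - A / x + B / (x + 1) := by
  rw [cubicG_eval]
  constructor
  · intro h
    have h0 : x ≠ 0 := by
      rintro rfl
      apply hA
      linear_combination -h
    have h1 : x ≠ -1 := by
      rintro rfl
      apply hB
      linear_combination -h
    have h2 : x + 1 ≠ 0 := fun h => h1 (eq_neg_of_add_eq_zero_left h)
    refine ⟨h0, h1, ?_⟩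
    field_simp
    linear_combination -h
  · rintro ⟨h0, h1, h⟩
    have h2 : x + 1 ≠ 0 := fun h => h1 (eq_neg_of_add_eq_zero_left h)
    field_simp at h
    linear_combination -h

lemma cubicG_irr {K : Type*} [Field K] (A B s : K) (hA : A ≠ 0) (hB : B ≠ 0) :
    Irreducible (cubicG A B s) ↔
      ¬ ∃ x, x ≠ 0 ∧ x ≠ -1 ∧ s = x - 1 - A / x + B / (x + 1) := by
  rw [Polynomial.irreducible_iff_roots_eq_zero_of_degree_le_three
    (by rw [cubicG_natDegree]; norm_num) (by rw [cubicG_natDegree]),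
    Multiset.eq_zero_iff_forall_notMem, not_exists]
  refine forall_congr' fun x => not_congr ?_
  rw [Polynomial.mem_roots (cubicG_monic A B s).ne_zero, Polynomial.IsRoot.def,
    cubicG_root A B s x hA hB]

lemma cubicG_inj {K : Type*} [Field K] (A B : K) : Function.Injective (cubicG A B) := by
  intro s t h
  have := congrArg (fun f => Polynomial.coeff f 2) h
  simpa [cubicG] using this

lemma cubicG_surj {K : Type*} [Field K] (A B : K) (f : Polynomial K) (hm : f.Monic)
    (hd : f.natDegree = 3) (h0 : f.eval 0 = -A) (h1 : f.eval (-1) = -B) :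
    f = cubicG A B (-f.coeff 2) := by
  have h3 : f.coeff 3 = 1 := by rw [← hd]; exact hm
  have e : ∀ x, f.eval x = f.coeff 0 + f.coeff 1 * x + f.coeff 2 * x ^ 2 + x ^ 3 := by
    intro x
    rw [Polynomial.eval_eq_sum_range, hd]
    simp [Finset.sum_range_succ, h3]
  rw [e] at h0 h1
  ext i
  rcases lt_or_ge 3 i with hi | hi
  · rw [Polynomial.coeff_eq_zero_of_natDegree_lt (by omega),
      Polynomial.coeff_eq_zero_of_natDegree_lt (by rw [cubicG_natDegree]; omega)]
  · interval_cases i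
    · simp [cubicG]; linear_combination h0
    · simp [cubicG]; linear_combination h0 - h1
    · simp [cubicG]
    · simp [cubicG, h3]

/-- For `r = 3` and `ζ = ω^k` a generator of `𝔽_q^×`, the number of monic irreducible cubic
polynomials `f` over `𝔽_q` with `f(0) = -ζ^a` and `f(-1) = -ζ^b` equals `q - #Im(φ_{a,b})`,
where `φ_{a,b}(x) = x - 1 - ζ^a/x + ζ^b/(x+1)` on `𝔽_q ∖ {0,-1}`; in particular this count
lies between `2` and `⌊(2q+2)/3⌋`. -/
theorem card_I_three {p n q : ℕ} (hp : p.Prime) (hn : 1 ≤ n) (hq : q = p ^ n)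
    {K : Type*} [Field K] [Fintype K] (hK : Fintype.card K = q)
    (ζ : Kˣ) (hζ : ∀ x : Kˣ, x ∈ Subgroup.zpowers ζ)
    (a b : ℕ) (ha : a ≤ q - 2) (hb : b ≤ q - 2) :
    Nat.card {f : Polynomial K | f.Monic ∧ Irreducible f ∧ f.natDegree = 3 ∧
        f.eval 0 = -(ζ : K) ^ a ∧ f.eval (-1) = -(ζ : K) ^ b} =
      q - Nat.card {s : K | ∃ x : K, x ≠ 0 ∧ x ≠ -1 ∧
        s = x - 1 - (ζ : K) ^ a / x + (ζ : K) ^ b / (x + 1)} ∧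
    2 ≤ Nat.card {f : Polynomial K | f.Monic ∧ Irreducible f ∧ f.natDegree = 3 ∧
        f.eval 0 = -(ζ : K) ^ a ∧ f.eval (-1) = -(ζ : K) ^ b} ∧
    Nat.card {f : Polynomial K | f.Monic ∧ Irreducible f ∧ f.natDegree = 3 ∧
        f.eval 0 = -(ζ : K) ^ a ∧ f.eval (-1) = -(ζ : K) ^ b} ≤ (2 * q + 2) / 3 := by
  classical
  have hA : (ζ : K) ^ a ≠ 0 := pow_ne_zero _ ζ.ne_zero
  have hB : (ζ : K) ^ b ≠ 0 := pow_ne_zero _ ζ.ne_zero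
  generalize (ζ : K) ^ a = A at *
  generalize (ζ : K) ^ b = B at *
  set S : Set K := {s : K | ∃ x : K, x ≠ 0 ∧ x ≠ -1 ∧ s = x - 1 - A / x + B / (x + 1)} with hS
  set I : Set (Polynomial K) := {f : Polynomial K | f.Monic ∧ Irreducible f ∧ f.natDegree = 3 ∧
        f.eval 0 = -A ∧ f.eval (-1) = -B} with hI
  have hIS : I = cubicG A B '' Sᶜ := by
    ext f
    constructor
    · rintro ⟨hm, hi, hd, h0, h1⟩
      have e := cubicG_surj A B f hm hd h0 h1
      refine ⟨_, ?_, e.symm⟩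
      rw [e, cubicG_irr _ _ _ hA hB] at hi
      convert hi using 1
      simp [cubicG]
      rfl
    · rintro ⟨s, hs, rfl⟩
      refine ⟨cubicG_monic _ _ _, (cubicG_irr _ _ _ hA hB).2 hs, cubicG_natDegree _ _ _, ?_, ?_⟩
      · rw [cubicG_eval]; ring
      · rw [cubicG_eval]; ring
  let φ : K → K := fun x => x - 1 - A / x + B / (x + 1)
  let T : Finset K := Finset.univ \ {0, -1}
  have hT : T.card = q - 2 := by
    have hne : (0 : K) ≠ -1 := by
      intro h
      exact one_ne_zero (neg_eq_zero.1 h.symm)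
    rw [Finset.card_sdiff_of_subset (Finset.subset_univ _), Finset.card_univ, hK, Finset.card_pair hne]
  have hST : S = (T.image φ : Finset K) := by
    ext s
    simp only [hS, T, φ, Set.mem_setOf_eq, Finset.coe_image, Set.mem_image, Finset.mem_coe,
      Finset.mem_sdiff, Finset.mem_univ, true_and, Finset.mem_insert, Finset.mem_singleton, not_or]
    constructor
    · rintro ⟨x, h0, h1, h⟩
      exact ⟨x, ⟨h0, h1⟩, h.symm⟩
    · rintro ⟨x, ⟨h0, h1⟩, h⟩
      exact ⟨x, h0, h1, h.symm⟩
  have hSc : S.ncard = (T.image φ).card := by rw [hST, Set.ncard_coe_finset]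
  have hle : (T.image φ).card ≤ T.card := Finset.card_image_le
  have hge : T.card ≤ 3 * (T.image φ).card := by
    apply Finset.card_le_mul_card_image
    intro s _
    have hsub : T.filter (fun x => φ x = s) ⊆ (cubicG A B s).roots.toFinset := by
      intro x hx
      simp only [T, φ, Finset.mem_filter, Finset.mem_sdiff, Finset.mem_univ, true_and,
        Finset.mem_insert, Finset.mem_singleton, not_or] at hx
      rw [Multiset.mem_toFinset, Polynomial.mem_roots (cubicG_monic A B s).ne_zero,
        Polynomial.IsRoot.def, cubicG_root A B s x hA hB]
      exact ⟨hx.1.1, hx.1.2, hx.2.symm⟩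
    calc _ ≤ _ := Finset.card_le_card hsub
      _ ≤ _ := Multiset.toFinset_card_le _
      _ ≤ _ := Polynomial.card_roots' _
      _ = 3 := cubicG_natDegree _ _ _
  have hc : S.ncard + Sᶜ.ncard = q := by
    rw [Set.ncard_add_ncard_compl, Nat.card_eq_fintype_card, hK]
  have hIc : I.ncard = Sᶜ.ncard := by
    rw [hIS, Set.ncard_image_of_injective _ (cubicG_inj A B)]
  have hq2 : 2 ≤ q := by
    rw [← hK]; exact Fintype.one_lt_card
  rw [Nat.card_coe_set_eq, Nat.card_coe_set_eq]
  omega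
end

section
/- Let q = p^n be a prime power, take r = 3, k = q^2 + q + 1, and 0 ≤ a,b ≤ q−2. Let T_3(a,b) = {x ∈ 𝔽_q : x^3 = ω^{ak} and (x+1)^3 = ω^{bk}}. Then #T_3(a,b) + 6 ≤ (a,b)_{q−1} ≤ #T_3(a,b) + 3·⌊(2q+2)/3⌋. In particular, 6 ≤ (a,b)_{q−1} ≤ 2q + 4. -/
/-- `x` lies in the cyclotomic coset `C_a = ω^a ⟨ω^e⟩` of `Fˣ`. -/
def InCycCoset {F : Type*} [Field F] (ω : Fˣ) (e a : ℕ) (x : Fˣ) : Prop :=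
  ∃ m : ℕ, x = ω ^ a * (ω ^ e) ^ m

/-- The cyclotomic number `(a,b)_e` : the number of `x ∈ C_a` with `x + 1 ∈ C_b`. -/
noncomputable def cycNum {F : Type*} [Field F] (ω : Fˣ) (e a b : ℕ) : ℕ :=
  Nat.card {x : Fˣ | InCycCoset ω e a x ∧ ∃ y : Fˣ, InCycCoset ω e b y ∧ (y : F) = (x : F) + 1}

section
open Polynomial

lemma aux_range {K F : Type*} [Field K] [Field F] [Fintype K] [Fintype F] [Algebra K F]
    (x : F) (hx : x ^ Fintype.card K = x) : ∃ u : K, algebraMap K F u = x := by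
  classical
  have h1 : (Finset.univ.image (algebraMap K F)) ⊆
      (X ^ Fintype.card K - X : F[X]).roots.toFinset := by
    intro y hy
    obtain ⟨u, -, rfl⟩ := Finset.mem_image.1 hy
    rw [Multiset.mem_toFinset, mem_roots (FiniteField.X_pow_card_sub_X_ne_zero F Fintype.one_lt_card)]
    simp [← map_pow, FiniteField.pow_card]
  have h2 := Finset.eq_of_subset_of_card_le h1 (by
    rw [Finset.card_image_of_injective _ (algebraMap K F).injective, Finset.card_univ]
    refine (Multiset.toFinset_card_le _).trans ((card_roots' _).trans ?_)
    rw [FiniteField.X_pow_card_sub_X_natDegree_eq F Fintype.one_lt_card])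
  have h3 : x ∈ (Finset.univ.image (algebraMap K F)) := by
    rw [h2, Multiset.mem_toFinset, mem_roots (FiniteField.X_pow_card_sub_X_ne_zero F Fintype.one_lt_card)]
    simp [hx]
  obtain ⟨u, -, h⟩ := Finset.mem_image.1 h3
  exact ⟨u, h⟩

lemma aux_root {K F : Type*} [Field K] [Field F] [Fintype K] [Fintype F] [Algebra K F]
    (hF : Fintype.card F = Fintype.card K ^ 3) (s t α : K)
    (h : ∀ u : K, u ^ 3 - s * u ^ 2 + t * u - α ≠ 0) :
    ∃ x : F, x ^ 3 - algebraMap K F s * x ^ 2 + algebraMap K F t * x - algebraMap K F α = 0 := by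
  set f : K[X] := X ^ 3 - C s * X ^ 2 + C t * X - C α with hf
  have hd : f.natDegree = 3 := by rw [hf]; compute_degree!
  have hirr : Irreducible f := by
    refine irreducible_of_degree_le_three_of_not_isRoot (by simp [hd]) fun u hu => h u ?_
    simpa [hf] using hu
  have : Fact (Irreducible f) := ⟨hirr⟩
  have hfr : Module.finrank K F = 3 := by
    have := Module.card_eq_pow_finrank (K := K) (V := F)
    rw [hF] at this
    exact (Nat.pow_right_injective Fintype.one_lt_card this).symm
  have hfa : Module.finrank K (AdjoinRoot f) = 3 := by
    rw [(AdjoinRoot.powerBasis hirr.ne_zero).finrank, AdjoinRoot.powerBasis_dim, hd]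
  have : Module.Finite K (AdjoinRoot f) := Module.finite_of_finrank_pos (by omega)
  have : Finite (AdjoinRoot f) := Module.finite_of_finite K
  obtain ⟨φ⟩ := FiniteField.nonempty_algHom_of_finrank_dvd (F := K) (K := AdjoinRoot f) (L := F)
    (by rw [hfr, hfa])
  refine ⟨φ (AdjoinRoot.root f), ?_⟩
  have h0 : aeval (AdjoinRoot.root f) f = 0 := by simp
  have h1 : aeval (φ (AdjoinRoot.root f)) f = 0 := by rw [aeval_algHom_apply, h0, map_zero]
  simpa [hf] using h1

lemma aux_coset {F : Type*} [Field F] [Fintype F] (q : ℕ) (hq : 2 ≤ q)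
    (hF : Fintype.card F = q ^ 3)
    (ω : Fˣ) (hω : ∀ x : Fˣ, x ∈ Subgroup.zpowers ω) (a : ℕ) (x : Fˣ) :
    (∃ m : ℕ, x = ω ^ a * (ω ^ (q - 1)) ^ m) ↔
      x ^ (q ^ 2 + q + 1) = (ω ^ (q ^ 2 + q + 1)) ^ a := by
  classical
  have ho : orderOf ω = (q ^ 2 + q + 1) * (q - 1) := by
    rw [orderOf_eq_card_of_forall_mem_zpowers hω, Nat.card_eq_fintype_card, Fintype.card_units, hF]
    obtain ⟨k, rfl⟩ := Nat.exists_eq_add_of_le hq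
    rw [show 2 + k - 1 = k + 1 by omega]
    apply Nat.sub_eq_of_eq_add
    ring
  constructor
  · rintro ⟨m, rfl⟩
    have : ω ^ ((q ^ 2 + q + 1) * (q - 1)) = 1 := by rw [← ho, pow_orderOf_eq_one]
    rw [mul_pow, ← pow_mul, ← pow_mul, ← pow_mul, ← pow_mul,
      show (q - 1) * (m * (q ^ 2 + q + 1)) = ((q ^ 2 + q + 1) * (q - 1)) * m by ring,
      pow_mul ω _ m, this, one_pow, mul_one, mul_comm a]
  · intro h
    obtain ⟨j, hj⟩ := mem_powers_iff_mem_zpowers.2 (hω ((ω ^ a)⁻¹ * x))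
    have hj' : ω ^ j = (ω ^ a)⁻¹ * x := hj
    have h1 : ω ^ (j * (q ^ 2 + q + 1)) = 1 := by
      rw [pow_mul, hj', mul_pow, h, inv_pow, ← pow_mul, ← pow_mul, mul_comm a, inv_mul_cancel]
    have h2 := orderOf_dvd_of_pow_eq_one h1
    rw [ho, mul_comm] at h2
    obtain ⟨m, rfl⟩ := Nat.dvd_of_mul_dvd_mul_right (by positivity) h2
    exact ⟨m, by rw [← pow_mul, hj']; simp⟩

lemma aux_image {K : Type*} [Field K] [Fintype K] [DecidableEq K] (α β : K)
    (hα : α ≠ 0) (hβ : β ≠ 0) (M : Finset K)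
    (hM : ∀ s, s ∈ M ↔ ∀ u : K, u ^ 3 - s * u ^ 2 + (β - α - 1 - s) * u - α ≠ 0) :
    2 ≤ M.card ∧ 3 * M.card ≤ 2 * Fintype.card K + 2 := by
  have h01 : (0 : K) ≠ -1 := by simp
  set D : Finset K := {0, -1}ᶜ with hD
  have hDc : D.card + 2 = Fintype.card K := by
    have := Finset.card_compl_add_card ({0, -1} : Finset K)
    rwa [Finset.card_pair h01] at this
  have hden : ∀ u ∈ D, u ^ 2 + u ≠ 0 := by
    intro u hu h
    have hu' : u ≠ 0 ∧ u ≠ -1 := by simpa [hD] using hu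
    have : u * (u + 1) = 0 := by rw [← h]; ring
    rcases mul_eq_zero.1 this with h | h
    · exact hu'.1 h
    · exact hu'.2 (eq_neg_of_add_eq_zero_left h)
  set R : K → K := fun u => (u ^ 3 + (β - α - 1) * u - α) / (u ^ 2 + u) with hR
  have hRs : ∀ u ∈ D, ∀ s, R u = s ↔
      u ^ 3 - s * u ^ 2 + (β - α - 1 - s) * u - α = 0 := by
    intro u hu s
    simp only [hR]
    rw [div_eq_iff (hden u hu)]
    constructor <;> intro h <;> linear_combination h
  have hMc : Mᶜ = D.image R := by
    ext s
    rw [Finset.mem_compl, hM]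
    push Not
    rw [Finset.mem_image]
    constructor
    · rintro ⟨u, hu⟩
      have huD : u ∈ D := by
        simp only [hD, Finset.mem_compl, Finset.mem_insert, Finset.mem_singleton]
        rintro (rfl | rfl)
        · apply hα; linear_combination -hu
        · apply hβ; linear_combination -hu
      exact ⟨u, huD, (hRs u huD s).2 hu⟩
    · rintro ⟨u, huD, hu⟩
      exact ⟨u, (hRs u huD s).1 hu⟩
  have h1 := Finset.card_compl_add_card M
  have h2 : (D.image R).card ≤ D.card := Finset.card_image_le
  have h3 : D.card ≤ 3 * (D.image R).card := by
    refine Finset.card_le_mul_card_image _ 3 fun s _ => ?_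
    set f : K[X] := X ^ 3 - C s * X ^ 2 + C (β - α - 1 - s) * X - C α with hf
    have hd : f.natDegree = 3 := by rw [hf]; compute_degree!
    have hf0 : f ≠ 0 := by rintro h; simp [h] at hd
    calc _ ≤ f.roots.toFinset.card := by
          refine Finset.card_le_card fun u hu => ?_
          rw [Finset.mem_filter] at hu
          rw [Multiset.mem_toFinset, mem_roots hf0]
          have := (hRs u hu.1 s).1 hu.2
          simpa [hf] using this
      _ ≤ _ := (Multiset.toFinset_card_le _).trans ((card_roots' _).trans hd.le)
  rw [hMc] at h1
  omega

lemma aux_core {K F : Type*} [Field K] [Field F] [Fintype K] [Fintype F] [Algebra K F]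
    [DecidableEq K] [DecidableEq F]
    (hF : Fintype.card F = Fintype.card K ^ 3) (α β : K)
    (hα : α ≠ 0) (hβ : β ≠ 0) (k : ℕ) (hk : k = Fintype.card K ^ 2 + Fintype.card K + 1)
    (S : Finset F) (hS : ∀ x, x ∈ S ↔ x ^ k = algebraMap K F α ∧ (x + 1) ^ k = algebraMap K F β)
    (T : Finset K) (hT : ∀ x, x ∈ T ↔ x ^ 3 = α ∧ (x + 1) ^ 3 = β) :
    ∃ m : ℕ, S.card = T.card + 3 * m ∧ 2 ≤ m ∧ 3 * m ≤ 2 * Fintype.card K + 2 := by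
  set φ : F →ₐ[K] F := FiniteField.frobeniusAlgHom K F with hφ
  have hφp : ∀ x, φ x = x ^ Fintype.card K := fun x => by simp [hφ]
  have hφ3 : ∀ x, φ (φ (φ x)) = x := by
    intro x
    rw [hφp, hφp, hφp, ← pow_mul, ← pow_mul,
      show Fintype.card K * (Fintype.card K * Fintype.card K) = Fintype.card K ^ 3 by ring, ← hF,
      FiniteField.pow_card]
  have hk' : ∀ x : F, x ^ k = x * φ x * φ (φ x) := by
    intro x
    rw [hφp, hφp, ← pow_mul, hk]
    ring
  have hfix : ∀ x, φ x = x → ∃ u : K, algebraMap K F u = x := fun x hx =>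
    aux_range x (by rw [← hφp, hx])
  have hS' : ∀ x, x ∈ S ↔ x * φ x * φ (φ x) = algebraMap K F α ∧
      (x + 1) * (φ x + 1) * (φ (φ x) + 1) = algebraMap K F β := by
    intro x
    rw [hS, hk', hk']
    simp only [map_add, map_one]
  have hTS : ∀ u : K, algebraMap K F u ∈ S ↔ u ∈ T := by
    intro u
    rw [hS', hT, AlgHom.commutes, AlgHom.commutes, ← (algebraMap K F).injective.eq_iff,
      ← (algebraMap K F).injective.eq_iff (b := β)]
    simp only [map_pow, map_add, map_one]
    rw [show ∀ z : F, z * z * z = z ^ 3 from fun z => by ring,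
      show ∀ z : F, z * z * z = z ^ 3 from fun z => by ring]
  have htr : ∀ x, ∃ u : K, algebraMap K F u = x + φ x + φ (φ x) := by
    intro x
    apply hfix
    simp only [map_add, hφ3]
    ring
  choose g hg using htr
  set M : Finset K := Finset.univ.filter
    (fun s => ∀ u : K, u ^ 3 - s * u ^ 2 + (β - α - 1 - s) * u - α ≠ 0) with hMdef
  have hM : ∀ s, s ∈ M ↔ ∀ u : K, u ^ 3 - s * u ^ 2 + (β - α - 1 - s) * u - α ≠ 0 := by
    simp [hMdef]
  set N : Finset F := S \ T.image (algebraMap K F) with hN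
  have hNmem : ∀ x, x ∈ N ↔ x ∈ S ∧ φ x ≠ x := by
    intro x
    rw [hN, Finset.mem_sdiff]
    refine and_congr_right fun hx => not_congr ?_
    rw [Finset.mem_image]
    constructor
    · rintro ⟨u, -, rfl⟩
      exact φ.commutes u
    · intro h
      obtain ⟨u, rfl⟩ := hfix x h
      exact ⟨u, (hTS u).1 hx, rfl⟩
  have hfac : ∀ x ∈ S, ∀ z : F, z ^ 3 - algebraMap K F (g x) * z ^ 2 +
      algebraMap K F (β - α - 1 - g x) * z - algebraMap K F α =
        (z - x) * (z - φ x) * (z - φ (φ x)) := by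
    intro x hx z
    obtain ⟨h1, h2⟩ := (hS' x).1 hx
    simp only [map_sub, map_one, ← h1, ← h2, hg]
    ring
  have hgM : ∀ x ∈ N, g x ∈ M := by
    intro x hx
    obtain ⟨hxS, hne⟩ := (hNmem x).1 hx
    rw [hM]
    intro u hu
    have h := hfac x hxS (algebraMap K F u)
    have h' := congrArg (algebraMap K F) hu
    simp only [map_sub, map_add, map_mul, map_pow, map_one, map_zero] at h h'
    rw [h'] at h
    have hφu : φ (algebraMap K F u) = algebraMap K F u := φ.commutes u
    apply hne
    rcases mul_eq_zero.1 h.symm with h | h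
    · rcases mul_eq_zero.1 h with h | h
      · rw [← sub_eq_zero.1 h, hφu]
      · have h := sub_eq_zero.1 h
        have h4 : x = algebraMap K F u := by rw [← hφ3 x, ← h, hφu, hφu]
        rw [h4, hφu]
    · have h := sub_eq_zero.1 h
      have h4 : x = algebraMap K F u := by rw [← hφ3 x, ← h, hφu]
      rw [h4, hφu]
  have hfib : ∀ s ∈ M, (N.filter (fun x => g x = s)).card = 3 := by
    intro s hs
    rw [hM] at hs
    obtain ⟨x, hx⟩ := aux_root (F := F) hF s (β - α - 1 - s) α hs
    have hne : φ x ≠ x := by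
      intro h
      obtain ⟨u, rfl⟩ := hfix x h
      apply hs u
      apply (algebraMap K F).injective
      simpa using hx
    have hy := congrArg φ hx
    have hz := congrArg φ hy
    simp only [map_sub, map_add, map_mul, map_pow, map_one, map_zero, AlgHom.commutes] at hx hy hz
    have hne2 : φ (φ x) ≠ φ x := fun h => hne (φ.toRingHom.injective h)
    have hne3 : x ≠ φ (φ x) := by
      intro h
      apply hne
      conv_lhs => rw [h]
      exact hφ3 x
    generalize hY : φ x = y at *
    generalize hZ : φ y = z at *
    have hZ3 : φ z = x := by rw [← hZ, ← hY, hφ3]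
    set A := algebraMap K F α
    set B := algebraMap K F β
    set s' := algebraMap K F s with hs'
    have e1 : x ^ 2 + x * y + y ^ 2 - s' * (x + y) + (B - A - 1 - s') = 0 := by
      apply mul_left_cancel₀ (sub_ne_zero.2 hne)
      linear_combination hy - hx
    have e2 : z ^ 2 + z * y + y ^ 2 - s' * (z + y) + (B - A - 1 - s') = 0 := by
      apply mul_left_cancel₀ (sub_ne_zero.2 hne2)
      linear_combination hz - hy
    have e3 : s' = x + y + z := by
      apply mul_left_cancel₀ (sub_ne_zero.2 hne3)
      linear_combination e2 - e1
    have e4 : B - A - 1 - s' = x * y + y * z + z * x := by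
      rw [e3] at e1 ⊢
      linear_combination e1
    have e5 : x * y * z = A := by
      rw [e4, e3] at hx
      linear_combination hx
    have e6 : (x + 1) * (y + 1) * (z + 1) = B := by
      linear_combination e5 - e4 - e3
    have hfibeq : N.filter (fun x => g x = s) = {x, y, z} := by
      have hxg : g x = s := by
        apply (algebraMap K F).injective
        rw [hg, hY, hZ, ← e3]
      have hyg : g y = s := by
        apply (algebraMap K F).injective
        rw [hg, hZ, hZ3, ← hs', e3]; ring
      have hzg : g z = s := by
        apply (algebraMap K F).injective
        rw [hg, hZ3, hY, ← hs', e3]; ring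
      have hxS : x ∈ S := by rw [hS', hY, hZ]; exact ⟨e5, e6⟩
      have hyS : y ∈ S := by
        rw [hS', hZ, hZ3]; exact ⟨by rw [← e5]; ring, by rw [← e6]; ring⟩
      have hzS : z ∈ S := by
        rw [hS', hZ3, hY]; exact ⟨by rw [← e5]; ring, by rw [← e6]; ring⟩
      ext w
      rw [Finset.mem_filter, hNmem]
      simp only [Finset.mem_insert, Finset.mem_singleton]
      constructor
      · rintro ⟨⟨hw, -⟩, hws⟩
        have h1 := hfac w hw w
        have h2 := hfac x hxS w
        rw [hws] at h1
        rw [hxg] at h2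
        rw [h2, hY, hZ] at h1
        simp only [sub_self, zero_mul, mul_eq_zero, sub_eq_zero] at h1
        tauto
      · rintro (rfl | rfl | rfl)
        · exact ⟨⟨hxS, by rw [hY]; exact hne⟩, hxg⟩
        · exact ⟨⟨hyS, by rw [hZ]; exact hne2⟩, hyg⟩
        · exact ⟨⟨hzS, by rw [hZ3]; exact hne3⟩, hzg⟩
    rw [hfibeq, Finset.card_eq_three]
    exact ⟨x, y, z, hne.symm, hne3, hne2.symm, rfl⟩
  have hNc : N.card = 3 * M.card := by
    rw [Finset.card_eq_sum_card_fiberwise (f := g) (t := M) hgM, Finset.sum_congr rfl hfib]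
    simp [mul_comm]
  have hsub : T.image (algebraMap K F) ⊆ S := by
    intro x hx
    obtain ⟨u, hu, rfl⟩ := Finset.mem_image.1 hx
    exact (hTS u).2 hu
  have hcard := Finset.card_sdiff_add_card_eq_card hsub
  rw [Finset.card_image_of_injective _ (algebraMap K F).injective] at hcard
  change N.card + _ = _ at hcard
  rw [hNc] at hcard
  refine ⟨M.card, ?_, aux_image α β hα hβ M hM⟩
  omega

lemma aux_T {K : Type*} [Field K] (α β : K) (T : Finset K)
    (hT : ∀ x, x ∈ T ↔ x ^ 3 = α ∧ (x + 1) ^ 3 = β) : T.card ≤ 2 := by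
  by_contra! h
  obtain ⟨x, y, z, hx, hy, hz, hxy, hxz, hyz⟩ := Finset.two_lt_card_iff.1 h
  rw [hT] at hx hy hz
  by_cases h3 : (3 : K) = 0
  · apply hxy
    have : (x - y) ^ 3 = 0 := by
      linear_combination hx.1 - hy.1 - x * y * (x - y) * h3
    exact sub_eq_zero.1 (pow_eq_zero_iff (by norm_num) |>.1 this)
  · have e1 : x + y + 1 = 0 := by
      apply mul_left_cancel₀ (sub_ne_zero.2 hxy)
      apply mul_left_cancel₀ h3
      linear_combination hx.2 - hx.1 - hy.2 + hy.1
    have e2 : x + z + 1 = 0 := by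
      apply mul_left_cancel₀ (sub_ne_zero.2 hxz)
      apply mul_left_cancel₀ h3
      linear_combination hx.2 - hx.1 - hz.2 + hz.1
    exact hyz (by linear_combination e1 - e2)

end

/-- For `r = 3`, `k = q^2 + q + 1`, `ζ = ω^k` viewed in `𝔽_q`, and
`T_3(a,b) = {x ∈ 𝔽_q : x^3 = ζ^a, (x+1)^3 = ζ^b}`, the cyclotomic number satisfies
`#T_3(a,b) + 6 ≤ (a,b)_{q-1} ≤ #T_3(a,b) + 3⌊(2q+2)/3⌋`; in particular
`6 ≤ (a,b)_{q-1} ≤ 2q + 4`. -/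
theorem cycNum_r_three_bounds {p n q : ℕ} (hp : p.Prime) (hn : 1 ≤ n) (hq : q = p ^ n)
    {K F : Type*} [Field K] [Field F] [Fintype K] [Fintype F] [Algebra K F]
    (hK : Fintype.card K = q) (hF : Fintype.card F = q ^ 3)
    (ω : Fˣ) (hω : ∀ x : Fˣ, x ∈ Subgroup.zpowers ω)
    (ζ : K) (hζ : algebraMap K F ζ = (ω : F) ^ (q ^ 2 + q + 1))
    (a b : ℕ) (ha : a ≤ q - 2) (hb : b ≤ q - 2) :
    (Nat.card {x : K | x ^ 3 = ζ ^ a ∧ (x + 1) ^ 3 = ζ ^ b} + 6 ≤ cycNum ω (q - 1) a b ∧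
      cycNum ω (q - 1) a b ≤
        Nat.card {x : K | x ^ 3 = ζ ^ a ∧ (x + 1) ^ 3 = ζ ^ b} + 3 * ((2 * q + 2) / 3)) ∧
    (6 ≤ cycNum ω (q - 1) a b ∧ cycNum ω (q - 1) a b ≤ 2 * q + 4) := by
  classical
  have hq2 : 2 ≤ q := by rw [← hK]; exact Fintype.one_lt_card
  have hζ0 : ζ ≠ 0 := by
    rintro rfl
    rw [map_zero] at hζ
    exact pow_ne_zero _ ω.ne_zero hζ.symm
  have hcos : ∀ (a : ℕ) (x : Fˣ), InCycCoset ω (q - 1) a x ↔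
      (x : F) ^ (q ^ 2 + q + 1) = algebraMap K F (ζ ^ a) := by
    intro a x
    unfold InCycCoset
    rw [aux_coset q hq2 hF ω hω a x, map_pow, hζ, Units.ext_iff]
    simp
  set S : Finset F := Finset.univ.filter (fun x => x ^ (q ^ 2 + q + 1) = algebraMap K F (ζ ^ a) ∧
    (x + 1) ^ (q ^ 2 + q + 1) = algebraMap K F (ζ ^ b)) with hSdef
  set T : Finset K := Finset.univ.filter (fun x => x ^ 3 = ζ ^ a ∧ (x + 1) ^ 3 = ζ ^ b) with hTdef
  have hS : ∀ x, x ∈ S ↔ x ^ (q ^ 2 + q + 1) = algebraMap K F (ζ ^ a) ∧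
    (x + 1) ^ (q ^ 2 + q + 1) = algebraMap K F (ζ ^ b) := by simp [hSdef]
  have hT : ∀ x, x ∈ T ↔ x ^ 3 = ζ ^ a ∧ (x + 1) ^ 3 = ζ ^ b := by simp [hTdef]
  have hTc : Nat.card {x : K | x ^ 3 = ζ ^ a ∧ (x + 1) ^ 3 = ζ ^ b} = T.card := by
    rw [← Nat.card_eq_finsetCard T]
    exact Nat.card_congr (Equiv.subtypeEquivRight fun x => (hT x).symm)
  have hne : ∀ (a : ℕ) (x : F), x ^ (q ^ 2 + q + 1) = algebraMap K F (ζ ^ a) → x ≠ 0 := by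
    rintro a x h rfl
    rw [zero_pow (by omega)] at h
    exact pow_ne_zero a hζ0 ((map_eq_zero (algebraMap K F)).1 h.symm)
  have hSc : cycNum ω (q - 1) a b = S.card := by
    unfold cycNum
    rw [← Nat.card_eq_finsetCard S]
    refine Nat.card_congr (Equiv.ofBijective (fun x => ⟨(x.1 : F), ?_⟩) ⟨?_, ?_⟩)
    · obtain ⟨x, h1, y, h2, h3⟩ := x
      rw [hS]
      exact ⟨(hcos _ _).1 h1, by rw [← h3]; exact (hcos _ _).1 h2⟩
    · intro x y h
      exact Subtype.ext (Units.ext (congrArg Subtype.val h))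
    · rintro ⟨x, hx⟩
      have hx' := (hS x).1 hx
      exact ⟨⟨Units.mk0 x (hne a x hx'.1), (hcos _ _).2 hx'.1,
        Units.mk0 (x + 1) (hne b _ hx'.2), (hcos _ _).2 hx'.2, rfl⟩, rfl⟩
  obtain ⟨m, h1, h2, h3⟩ := aux_core (K := K) (F := F) (by rw [hF, hK]) (ζ ^ a) (ζ ^ b)
    (pow_ne_zero _ hζ0) (pow_ne_zero _ hζ0) (q ^ 2 + q + 1) (by rw [hK]) S hS T hT
  have h4 := aux_T _ _ T hT
  rw [hK] at h3
  rw [hTc, hSc]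
  omega
end
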